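/- Let r = √5 ∈ ℂ. The derivation module D(𝒜_ℭ) of the central hyperplane arrangement 𝒜_ℭ in ℂ⁴ with defining equation Q_ℭ = x·y·z·w·(x+y+z)·((r−1)y−2z+2w)·(2x+2y+(r−1)w)·((−r+3)x+2y+(−r+1)z+(r−1)w) is not a free module over S = ℂ[x,y,z,w]. -/

import Mathlib

open MvPolynomial

noncomputable section

/-- The polynomial ring `S = ℂ[x,y,z,w]`, with `x = X 0`, `y = X 1`, `z = X 2`, `w = X 3`. -/
abbrev S4 : Type := MvPolynomial (Fin 4) ℂ

/-- The linear form `c₀·x + c₁·y + c₂·z + c₃·w` with coefficient vector `c`. -/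
noncomputable def linForm (c : Fin 4 → ℂ) : S4 := ∑ i, C (c i) * X i

/-- A polynomial derivation `θ = a₁∂ₓ + a₂∂_y + a₃∂_z + a₄∂_w` of `S` is identified with
its coefficient tuple `a : Fin 4 → S`; the linear map `derMap f` sends `a` to `θ(f)`. -/
noncomputable def derMap (f : S4) : (Fin 4 → S4) →ₗ[S4] S4 where
  toFun a := ∑ i, a i * pderiv i f
  map_add' a b := by simp [add_mul, Finset.sum_add_distrib]
  map_smul' c a := by simp [Finset.mul_sum, mul_assoc]

/-- The derivation module `D(𝒜)` of the central arrangement whose hyperplanes are the kernels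
of the linear forms `linForm (α H)`: all derivations `θ` with `θ(α_H) ∈ S·α_H` for every `H`. -/
noncomputable def derivModule {ι : Type} (α : ι → (Fin 4 → ℂ)) :
    Submodule S4 (Fin 4 → S4) :=
  ⨅ H, Submodule.comap (derMap (linForm (α H))) (Ideal.span {linForm (α H)})

end

/-- `r = √5` regarded as a complex number. -/
noncomputable def r : ℂ := Real.sqrt 5

/-- The coefficient vectors of the eight linear factors of Q = xyzw(x+y+z)((r-1)y-2z+2w)(2x+2y+(r-1)w)((-r+3)x+2y+(-r+1)z+(r-1)w), defining the rigid Cynk–Szemberg octic arrangement 𝒜_ℭ ⊂ ℙ³. -/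
noncomputable def AFrakC : Fin 8 → (Fin 4 → ℂ) :=
  ![![1, 0, 0, 0],
    ![0, 1, 0, 0],
    ![0, 0, 1, 0],
    ![0, 0, 0, 1],
    ![1, 1, 1, 0],
    ![0, r-1, -2, 2],
    ![2, 2, 0, r-1],
    ![-r+3, 2, -r+1, r-1]]

/-- A surjective semilinear map from a finite free module onto a vector space bounds the dimension
of the target by the rank of the source. -/
theorem finrank_le_of_surjective_semilinear {R K M V : Type*} [CommRing R] [Nontrivial R] [Field K]
    [AddCommGroup M] [Module R M] [Module.Free R M] [Module.Finite R M]
    [AddCommGroup V] [Module K V] {ε : R →+* K} [RingHomSurjective ε]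
    (φ : M →ₛₗ[ε] V) (hφ : Function.Surjective φ) :
    Module.finrank K V ≤ Module.finrank R M := by
  have hspan : Submodule.span K (Set.range (φ ∘ Module.finBasis R M)) = ⊤ := by
    rw [Set.range_comp, ← Submodule.map_span, Module.Basis.span_eq, Submodule.map_top,
      LinearMap.range_eq_top.mpr hφ]
  have hcard := finrank_range_le_card (R := K) (φ ∘ Module.finBasis R M)
  rwa [Set.finrank, hspan, finrank_top, Fintype.card_fin] at hcard

theorem derMap_linForm (c : Fin 4 → ℂ) (a : Fin 4 → S4) :
    derMap (linForm c) a = ∑ i, C (c i) * a i := by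
  simp only [derMap, linForm, LinearMap.coe_mk, AddHom.coe_mk, map_sum, Derivation.leibniz,
    pderiv_C, pderiv_X, smul_eq_mul, mul_zero, add_zero]
  refine Finset.sum_congr rfl fun i _ => ?_
  rw [Finset.sum_eq_single i (fun j _ hj => by simp [hj.symm]) (by simp)]
  simp [mul_comm]

theorem mem_derivModule {ι : Type} {α : ι → Fin 4 → ℂ} {a : Fin 4 → S4} :
    a ∈ derivModule α ↔ ∀ H, linForm (α H) ∣ ∑ i, C (α H i) * a i := by
  simp [derivModule, Ideal.mem_span_singleton, derMap_linForm]

/-- The four planes `x = 0`, `y = 0`, `z = 0`, `x + y + z = 0`, which are the members of the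
arrangement passing through `(0, 0, 0, 1)`. -/
def planesThroughPoint : Fin 4 → Fin 4 → ℂ :=
  ![![1, 0, 0, 0], ![0, 1, 0, 0], ![0, 0, 1, 0], ![1, 1, 1, 0]]

theorem mem_derivModule_planesThroughPoint {a : Fin 4 → S4} :
    a ∈ derivModule planesThroughPoint ↔
      X 0 ∣ a 0 ∧ X 1 ∣ a 1 ∧ X 2 ∣ a 2 ∧ X 0 + X 1 + X 2 ∣ a 0 + a 1 + a 2 := by
  simp [mem_derivModule, Fin.forall_fin_succ, planesThroughPoint, linForm, Fin.sum_univ_four]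

theorem derivModule_AFrakC_le : derivModule AFrakC ≤ derivModule planesThroughPoint := by
  intro a ha
  rw [mem_derivModule] at ha ⊢
  intro H
  fin_cases H
  exacts [ha 0, ha 1, ha 2, ha 4]

/-- The product of the linear forms of the arrangement that do not vanish at `(0, 0, 0, 1)`. -/
noncomputable def complementaryForm : S4 :=
  linForm (AFrakC 3) * linForm (AFrakC 5) * linForm (AFrakC 6) * linForm (AFrakC 7)

theorem complementaryForm_smul_mem {a : Fin 4 → S4} (ha : a ∈ derivModule planesThroughPoint) :
    complementaryForm • a ∈ derivModule AFrakC := by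
  rw [mem_derivModule] at ha ⊢
  intro H
  have hsum : ∑ i, C (AFrakC H i) * (complementaryForm • a) i =
      complementaryForm * ∑ i, C (AFrakC H i) * a i := by
    rw [Finset.mul_sum]
    exact Finset.sum_congr rfl fun i _ => by simp [mul_left_comm]
  rw [hsum]
  fin_cases H
  · exact (ha 0).mul_left _
  · exact (ha 1).mul_left _
  · exact (ha 2).mul_left _
  · exact Dvd.dvd.mul_right (((dvd_mul_right _ _).mul_right _).mul_right _) _
  · exact (ha 3).mul_left _
  · exact Dvd.dvd.mul_right (((dvd_mul_left _ _).mul_right _).mul_right _) _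
  · exact Dvd.dvd.mul_right ((dvd_mul_left _ _).mul_right _) _
  · exact Dvd.dvd.mul_right (dvd_mul_left _ _) _

/-- Evaluation of polynomials at the point `(0, 0, 0, 1)`. -/
noncomputable abbrev evalPoint : S4 →+* ℂ := eval ![0, 0, 0, 1]

instance : RingHomSurjective evalPoint := ⟨fun c => ⟨C c, by simp⟩⟩

theorem r_sub_one_ne_zero : r - 1 ≠ 0 := by
  intro h
  have hr : r = 1 := by linear_combination h
  have hsq : r ^ 2 = 5 := by
    rw [r, ← Complex.ofReal_pow, Real.sq_sqrt (by norm_num)]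
    norm_num
  rw [hr] at hsq
  norm_num at hsq

theorem evalPoint_complementaryForm_ne_zero : evalPoint complementaryForm ≠ 0 := by
  simp [complementaryForm, linForm, AFrakC, Fin.sum_univ_four, r_sub_one_ne_zero]

/-- A derivation `a` tangent to the planes through `(0, 0, 0, 1)` satisfies `a 0 = x f₀`,
`a 1 = y f₁`, `a 2 = z f₂`, and its class in the fibre at that point is recorded by the
`w`-component, the common value of the `fᵢ`, and the first-order parts of their differences. -/
noncomputable def principalPart : derivModule planesThroughPoint →ₛₗ[evalPoint] Fin 5 → ℂ where
  toFun a :=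
    ![evalPoint (a.1 3),
      evalPoint (pderiv 0 (a.1 0)),
      evalPoint (2 * pderiv 0 (pderiv 1 (a.1 0)) - pderiv 1 (pderiv 1 (a.1 1))),
      evalPoint (2 * pderiv 0 (pderiv 2 (a.1 0)) - pderiv 2 (pderiv 2 (a.1 2))),
      evalPoint (2 * pderiv 1 (pderiv 2 (a.1 1)) - pderiv 2 (pderiv 2 (a.1 2)))]
  map_add' a b := by
    ext i
    fin_cases i <;> simp <;> ring
  map_smul' s a := by
    obtain ⟨a, ha⟩ := a
    obtain ⟨⟨f₀, h₀⟩, ⟨f₁, h₁⟩, ⟨f₂, h₂⟩, ⟨f₃, h₃⟩⟩ := mem_derivModule_planesThroughPoint.mp ha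
    rw [h₀, h₁, h₂] at h₃
    have e₀ := congr_arg (fun g => evalPoint (pderiv 0 g)) h₃
    have e₁ := congr_arg (fun g => evalPoint (pderiv 1 g)) h₃
    have e₂ := congr_arg (fun g => evalPoint (pderiv 2 g)) h₃
    simp [pderiv_X] at e₀ e₁ e₂
    ext i
    fin_cases i <;>
      simp [h₀, h₁, h₂, pderiv_X, e₀, e₁, e₂] <;> ring

theorem surjective_principalPart : Function.Surjective principalPart := by
  intro v
  refine ⟨⟨![C (v 1) * X 0 + C (v 2 / 2) * (X 0 * X 1) + C (v 3 / 2) * (X 0 * X 2),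
    C (v 1) * X 1 - C (v 2 / 2) * (X 0 * X 1) + C (v 4 / 2) * (X 1 * X 2),
    C (v 1) * X 2 - C (v 3 / 2) * (X 0 * X 2) - C (v 4 / 2) * (X 1 * X 2),
    C (v 0)], mem_derivModule_planesThroughPoint.mpr ⟨?_, ?_, ?_, ?_⟩⟩, ?_⟩
  · exact ⟨C (v 1) + C (v 2 / 2) * X 1 + C (v 3 / 2) * X 2, by simp; ring⟩
  · exact ⟨C (v 1) - C (v 2 / 2) * X 0 + C (v 4 / 2) * X 2, by simp; ring⟩
  · exact ⟨C (v 1) - C (v 3 / 2) * X 0 - C (v 4 / 2) * X 1, by simp; ring⟩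
  · exact ⟨C (v 1), by simp; ring⟩
  · ext i
    fin_cases i <;> simp [principalPart, pderiv_X] <;> ring

theorem surjective_principalPart_comp_inclusion :
    Function.Surjective (principalPart.comp (Submodule.inclusion derivModule_AFrakC_le)) := by
  intro v
  obtain ⟨a, ha⟩ := surjective_principalPart ((evalPoint complementaryForm)⁻¹ • v)
  refine ⟨⟨complementaryForm • a.1, complementaryForm_smul_mem a.2⟩, ?_⟩
  change principalPart (complementaryForm • a) = v
  rw [map_smulₛₗ, ha, smul_inv_smul₀ evalPoint_complementaryForm_ne_zero]

/-- The derivation module of 𝒜_ℭ is not a free `S`-module. -/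
theorem not_free_AFrakC : ¬ Module.Free S4 ↥(derivModule AFrakC) := by
  intro hfree
  have hle := finrank_le_of_surjective_semilinear (principalPart.comp (Submodule.inclusion
    derivModule_AFrakC_le)) surjective_principalPart_comp_inclusion
  have hrank := Submodule.finrank_le (derivModule AFrakC)
  simp only [Module.finrank_fin_fun] at hle hrank
  omega
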